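/- Let D ⊆ ℕ be c.e. Suppose there is a c.e. set W with D ⊆ W such that (ℕ ∖ W) ∪ D is not c.e. (equivalently, the lattice of c.e. supersets of D is not a boolean algebra). Then there exist c.e. sets D̃ and Ã with D ⊆ D̃ ⊆ Ã and D̃ ⊂ₘ Ã. -/

import Mathlib

/-- A set of natural numbers is computably enumerable if it is the domain of a
partial computable function. -/
def CE (A : Set ℕ) : Prop := ∃ f : ℕ →. ℕ, Partrec f ∧ A = f.Dom

/-- A set of natural numbers is computable if its membership predicate is computable. -/
def IsComputableSet (A : Set ℕ) : Prop := ComputablePred (· ∈ A)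

/-- `X ⊆* Y` : `X ∖ Y` is finite. -/
def SubsetStar (X Y : Set ℕ) : Prop := (X \ Y).Finite

/-- `X ⊑ A` : `X` is a split of the c.e. set `A`, i.e. `X` is c.e. and there is a
c.e. set `Y` with `X ∩ Y = ∅` and `X ∪ Y = A`. -/
def Split (A X : Set ℕ) : Prop := CE X ∧ ∃ Y : Set ℕ, CE Y ∧ X ∩ Y = ∅ ∧ X ∪ Y = A

/-- `B ⊂ₛ A` : `B` is a small subset of `A`. -/
def SmallSubset (B A : Set ℕ) : Prop :=
  B ⊆ A ∧ ∀ U V : Set ℕ, CE U → CE V → SubsetStar (U ∩ (A \ B)) V → CE ((U \ A) ∪ V)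

/-- `B ⊂ₘ A` : `B` is a major subset of `A`. -/
def MajorSubset (B A : Set ℕ) : Prop :=
  B ⊆ A ∧ (A \ B).Infinite ∧
    ∀ W : Set ℕ, CE W → A ∪ W = Set.univ → (Set.univ \ (B ∪ W)).Finite

/-!
Consider intervals of numbers which are left alone while they contain an element that entered `W`
after their last extension and is not yet in `D`, and which are otherwise extended up to the current
stage. If the interval starting at `k` were extended forever, then up to finitely many elements
`(ℕ ∖ W) ∪ D` would be `D` together with all `x ≥ k` that are outside `W` at an extension beyond
`x`, hence c.e. So a sequence of adjacent intervals settles, and the elements entering `W` inside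
them form a uniformly c.e. sequence of disjoint blocks, none of which is contained in `D`.

The candidate of a block is its least element outside `D`, as approximated at the current stage.
Markers `0, 1, 2, …` are put on blocks. The `i`-th one moves to a new block whenever, for some
`e ≤ j < i`, the candidate of marker `j` changes its membership in `V e`, and the candidates it
leaves behind go into `D̃`; eventually it rests on a block whose candidate settles at some `c i`. A
candidate of marker `i` goes into `Ã` unless it is outside some `V e` with `2 * e ≤ i` which
contains the candidates of all markers `j` with `2 * e ≤ j < i`. If now `Ã ∪ V e = ℕ`, then by
induction `c i ∈ V e` for all `i ≥ 2 * e`, so that every element of `Ã ∖ D̃` ever marked by one of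
these markers is in `V e`, and the other markers mark only finitely many elements of `Ã ∖ D̃`. On
the other hand, each `e` holds back at most one of the `c i`, and only those `e` with `2 * e ≤ i`
can hold back `c i`; so infinitely many of the `c i` are in `Ã ∖ D̃`.
-/

section Enumerations

variable {α : Type*} [Primcodable α] {p q : α → Prop} {W : ℕ → Set ℕ} {V : ℕ → ℕ → Set ℕ}

theorem primrecPred_exists_lt {r : α → ℕ → Prop} {b : α → ℕ} (hb : Primrec b)
    (hr : PrimrecPred fun c : α × ℕ => r c.1 c.2) : PrimrecPred fun a => ∃ x < b a, r a x := by
  have hr' : PrimrecRel fun (x : ℕ) (a : α) => r a x := hr.comp (Primrec.snd.pair Primrec.fst)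
  exact (hr'.exists_mem_list.comp (Primrec.list_range.comp hb) Primrec.id).of_eq fun a => by simp

theorem primrecPred_forall_lt {r : α → ℕ → Prop} {b : α → ℕ} (hb : Primrec b)
    (hr : PrimrecPred fun c : α × ℕ => r c.1 c.2) : PrimrecPred fun a => ∀ x < b a, r a x :=
  (primrecPred_exists_lt (r := fun a x => ¬ r a x) hb hr.not).not.of_eq fun a => by push Not; rfl

theorem primrecPred_imp (hp : PrimrecPred p) (hq : PrimrecPred q) :
    PrimrecPred fun a => p a → q a :=
  (hp.not.or hq).of_eq fun _ => imp_iff_not_or.symm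

theorem primrecPred_iff (hp : PrimrecPred p) (hq : PrimrecPred q) :
    PrimrecPred fun a => (p a ↔ q a) :=
  ((primrecPred_imp hp hq).and (primrecPred_imp hq hp)).of_eq fun _ => iff_def.symm

/-- A primitive recursive enumeration, in increasing stages, of the c.e. set `⋃ s, W s`. -/
structure IsEnumeration (W : ℕ → Set ℕ) : Prop where
  monotone : Monotone W
  primrecPred : PrimrecPred fun c : ℕ × ℕ => c.2 ∈ W c.1

/-- A primitive recursive enumeration, in increasing stages, of the sets `⋃ s, V e s`, uniformly
in the index `e`. -/
structure IsUniformEnumeration (V : ℕ → ℕ → Set ℕ) : Prop where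
  monotone : ∀ e, Monotone (V e)
  primrecPred : PrimrecPred fun c : ℕ × ℕ × ℕ => c.2.2 ∈ V c.1 c.2.1

theorem IsEnumeration.primrecPred_mem (hW : IsEnumeration W) {s x : α → ℕ} (hs : Primrec s)
    (hx : Primrec x) : PrimrecPred fun a => x a ∈ W (s a) :=
  hW.primrecPred.comp (hs.pair hx)

theorem IsUniformEnumeration.primrecPred_mem (hV : IsUniformEnumeration V) {e s x : α → ℕ}
    (he : Primrec e) (hs : Primrec s) (hx : Primrec x) :
    PrimrecPred fun a => x a ∈ V (e a) (s a) :=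
  hV.primrecPred.comp (he.pair (hs.pair hx))

theorem IsUniformEnumeration.isEnumeration (hV : IsUniformEnumeration V) (e : ℕ) :
    IsEnumeration (V e) :=
  ⟨hV.monotone e, hV.primrecPred_mem (Primrec.const e) Primrec.fst Primrec.snd⟩

theorem CE.of_primrecPred {γ : Type*} [Primcodable γ] [Inhabited γ] {r : ℕ → γ → Prop}
    (hr : PrimrecPred fun c : ℕ × γ => r c.1 c.2) : CE {x | ∃ y, r x y} := by
  classical
  have hdec : PrimrecPred fun c : ℕ × ℕ => r c.1 ((Encodable.decode (α := γ) c.2).getD default) :=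
    hr.comp (Primrec.fst.pair
      (Primrec.option_getD.comp (Primrec.decode.comp Primrec.snd) (Primrec.const default)))
  have hsearch : Partrec₂ fun x n =>
      Part.some (decide (r x ((Encodable.decode (α := γ) n).getD default))) :=
    hdec.decide.to_comp
  refine ⟨_, Partrec.rfind hsearch, ?_⟩
  ext x
  refine Iff.trans ?_ Nat.rfind_dom.symm
  constructor
  · rintro ⟨y, hy⟩
    exact ⟨Encodable.encode y, by simpa using hy, fun _ => trivial⟩
  · rintro ⟨n, hn, -⟩
    exact ⟨_, by simpa using hn⟩

theorem IsEnumeration.ce (hW : IsEnumeration W) : CE (⋃ s, W s) := by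
  have hset : ⋃ s, W s = {x | ∃ s, x ∈ W s} := Set.ext fun _ => Set.mem_iUnion
  exact hset ▸ CE.of_primrecPred (hW.primrecPred_mem Primrec.snd Primrec.fst)

theorem CE.of_finite {A : Set ℕ} (hA : A.Finite) : CE A := by
  have h : PrimrecPred fun c : ℕ × Unit => ∃ a ∈ hA.toFinset.toList, a = c.1 :=
    (PrimrecRel.exists_mem_list Primrec.eq).comp (Primrec.const _) Primrec.fst
  simpa using CE.of_primrecPred (r := fun x _ => ∃ a ∈ hA.toFinset.toList, a = x) h

open Nat.Partrec.Code in
theorem exists_universal_enumeration :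
    ∃ V, IsUniformEnumeration V ∧ ∀ A, CE A → ∃ e, ⋃ s, V e s = A := by
  refine ⟨fun e s => {x | (evaln s (Denumerable.ofNat Nat.Partrec.Code e) x).isSome},
    ⟨fun e s t hst x hx => ?_, ?_⟩, ?_⟩
  · obtain ⟨y, hy⟩ := Option.isSome_iff_exists.1 hx
    exact Option.isSome_iff_exists.2 ⟨y, evaln_mono hst hy⟩
  · exact (Primrec.eq.comp (Primrec.option_isSome.comp (primrec_evaln.comp
      (((Primrec.fst.comp Primrec.snd).pair ((Primrec.ofNat _).comp Primrec.fst)).pair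
        (Primrec.snd.comp Primrec.snd)))) (Primrec.const true))
  · rintro _ ⟨f, hf, rfl⟩
    obtain ⟨c, rfl⟩ := exists_code.1 (Partrec.nat_iff.1 hf)
    refine ⟨Encodable.encode c, Set.ext fun x => ?_⟩
    simp only [Set.mem_iUnion, Set.mem_ofPred_eq, Denumerable.ofNat_encode, PFun.mem_dom,
      evaln_complete, Option.isSome_iff_exists, Option.mem_def]
    exact exists_comm

theorem CE.union {A B : Set ℕ} (hA : CE A) (hB : CE B) : CE (A ∪ B) := by
  obtain ⟨V, hV, hcover⟩ := exists_universal_enumeration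
  obtain ⟨a, rfl⟩ := hcover A hA
  obtain ⟨b, rfl⟩ := hcover B hB
  rw [← Set.iUnion_union_distrib]
  refine IsEnumeration.ce ⟨(hV.monotone a).sup (hV.monotone b), ?_⟩
  exact (hV.primrecPred_mem (Primrec.const a) Primrec.fst Primrec.snd).or
    (hV.primrecPred_mem (Primrec.const b) Primrec.fst Primrec.snd)

end Enumerations

section ResetTimes

/-- A process running through stages `0, 1, 2, …` is reset at some of them; `f` is a reset time if
`f s` can be read as the last stage up to `s` at which this happened, and `0` if there is none. -/
structure IsResetTime (f : ℕ → ℕ) : Prop where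
  le : ∀ s, f s ≤ s
  eq_or_lt : ∀ ⦃s t⦄, s ≤ t → f t = f s ∨ s < f t

variable {f : ℕ → ℕ} {g : ℕ → ℕ → ℕ → ℕ}

theorem IsResetTime.monotone (hf : IsResetTime f) : Monotone f := fun s _ hst =>
  (hf.eq_or_lt hst).elim ge_of_eq fun h => (hf.le s).trans h.le

theorem IsResetTime.exists_eq_of_bddAbove (hf : IsResetTime f) (hb : BddAbove (Set.range f)) :
    ∃ L, ∀ s ≥ L, f s = L := by
  obtain ⟨u, hu⟩ := Nat.sSup_mem (Set.range_nonempty f) hb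
  refine ⟨f u, fun s hs => le_antisymm (hu ▸ le_csSup hb ⟨s, rfl⟩) ?_⟩
  rcases hf.eq_or_lt (hf.le u) with h | h
  · exact h.le.trans (hf.monotone hs)
  · exact absurd h (lt_irrefl _)

theorem IsResetTime.eq_of_eq_limit {L s t : ℕ} (hf : IsResetTime f) (hL : ∀ s ≥ L, f s = L)
    (hs : f s = L) (hst : s ≤ t) : f t = L :=
  hL t ((hs.symm.le.trans (hf.le s)).trans hst)

theorem IsResetTime.max_comp {g : ℕ → ℕ → ℕ} (hf : IsResetTime f) (hg : ∀ k, IsResetTime (g k)) :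
    IsResetTime fun s => max (f s) (g (f s) s) where
  le s := max_le (hf.le s) ((hg _).le s)
  eq_or_lt s t hst := by
    rcases hf.eq_or_lt hst with h | h
    · rcases (hg (f s)).eq_or_lt hst with h' | h'
      · exact Or.inl (by rw [h, h'])
      · exact Or.inr (lt_max_of_lt_right (by rwa [h]))
    · exact Or.inr (lt_max_of_lt_left h)

theorem isResetTime_findGreatest (c : ℕ → Prop) [DecidablePred c] :
    IsResetTime fun s => Nat.findGreatest c s where
  le _ := Nat.findGreatest_le _
  eq_or_lt s t hst := by
    refine (le_or_gt (Nat.findGreatest c t) s).imp_left fun h => ?_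
    refine le_antisymm ?_ (Nat.findGreatest_mono_right c hst)
    rcases eq_or_ne (Nat.findGreatest c t) 0 with h0 | h0
    · exact h0.le.trans (Nat.zero_le _)
    · exact Nat.le_findGreatest h (Nat.findGreatest_of_ne_zero rfl h0)

/-- The reset times of a stack of processes: a process is reset whenever the one below it is, and
also at the times `g i k`, where `k` is the last reset time of the processes below. -/
def nestedReset (g : ℕ → ℕ → ℕ → ℕ) : ℕ → ℕ → ℕ
  | 0, _ => 0
  | i + 1, s => max (nestedReset g i s) (g i (nestedReset g i s) s)

theorem isResetTime_nestedReset (hg : ∀ i k, IsResetTime (g i k)) (i : ℕ) :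
    IsResetTime (nestedReset g i) := by
  induction i with
  | zero => exact ⟨fun _ => Nat.zero_le _, fun _ _ _ => Or.inl rfl⟩
  | succ i ih => exact ih.max_comp (hg i)

theorem monotone_nestedReset (s : ℕ) : Monotone fun i => nestedReset g i s :=
  monotone_nat_of_le_succ fun _ => le_max_left _ _

theorem exists_nestedReset_eq (hg : ∀ i k, IsResetTime (g i k))
    (hb : ∀ i k, BddAbove (Set.range (g i k))) :
    ∃ T : ℕ → ℕ, ∀ i, ∀ s ≥ T i, nestedReset g i s = T i := by
  suffices ∀ i, ∃ L, ∀ s ≥ L, nestedReset g i s = L from Classical.skolem.1 this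
  intro i
  induction i with
  | zero => exact ⟨0, fun _ _ => rfl⟩
  | succ i ih =>
    obtain ⟨L, hL⟩ := ih
    obtain ⟨M, hM⟩ := (hg i L).exists_eq_of_bddAbove (hb i L)
    refine ⟨max L M, fun s hs => ?_⟩
    rw [nestedReset, hL s (le_of_max_le_left hs), hM s (le_of_max_le_right hs)]

theorem nestedReset_eq_of_le {T : ℕ → ℕ} {i j s : ℕ} (hg : ∀ i k, IsResetTime (g i k))
    (hT : ∀ i, ∀ s ≥ T i, nestedReset g i s = T i) (hs : nestedReset g i s = T i) (hji : j ≤ i) :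
    nestedReset g j s = T j := by
  have hj := hT j (max s (T j)) (le_max_right _ _)
  rcases (isResetTime_nestedReset hg j).eq_or_lt (le_max_left s (T j)) with h | h
  · exact h.symm.trans hj
  · have hi := (isResetTime_nestedReset hg i).eq_of_eq_limit (hT i) hs (le_max_left s (T j))
    have hle := (h.trans_le (monotone_nestedReset _ hji)).trans_eq (hi.trans hs.symm)
    exact absurd hle ((isResetTime_nestedReset hg i).le s).not_gt

theorem le_of_nestedReset_succ_eq {T : ℕ → ℕ} {i s t : ℕ} (hg : ∀ i k, IsResetTime (g i k))
    (hT : ∀ i, ∀ s ≥ T i, nestedReset g i s = T i) (hs : nestedReset g (i + 1) s = T (i + 1))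
    (hst : s ≤ t) : g i (T i) t ≤ s := by
  have hi := (isResetTime_nestedReset hg i).eq_of_eq_limit (hT i)
    (nestedReset_eq_of_le hg hT hs i.le_succ) hst
  calc g i (T i) t ≤ nestedReset g (i + 1) t := by rw [nestedReset, hi]; exact le_max_right _ _
    _ = nestedReset g (i + 1) s :=
        ((isResetTime_nestedReset hg (i + 1)).eq_of_eq_limit (hT _) hs hst).trans hs.symm
    _ ≤ s := (isResetTime_nestedReset hg (i + 1)).le s

theorem primrec_nestedReset {α : Type*} [Primcodable α]
    (hg : Primrec fun c : ℕ × ℕ × ℕ => g c.1 c.2.1 c.2.2) {i s : α → ℕ} (hi : Primrec i)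
    (hs : Primrec s) : Primrec fun a => nestedReset g (i a) (s a) := by
  have hstep : Primrec₂ fun (a : α) (c : ℕ × ℕ) => max c.2 (g c.1 c.2 (s a)) := by
    have hc : Primrec fun q : α × ℕ × ℕ => q.2.2 := Primrec.snd.comp Primrec.snd
    exact Primrec.nat_max.comp hc
      (hg.comp ((Primrec.fst.comp Primrec.snd).pair (hc.pair (hs.comp Primrec.fst))))
  refine (Primrec.nat_rec' hi (Primrec.const 0) hstep).of_eq fun a => ?_
  induction i a with
  | zero => rfl
  | succ i ih => simp only [nestedReset, ih]

end ResetTimes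

section DisjointBlocks

variable {W D : ℕ → Set ℕ} {k r s t x : ℕ}

/-- At stage `s`, the interval `[k, r)` contains an element which entered `W` after stage `r` and is
not yet in `D`. -/
def IsBusy (W D : ℕ → Set ℕ) (k r s : ℕ) : Prop :=
  ∃ x < r, k ≤ x ∧ x ∈ W s ∧ x ∉ W r ∧ x ∉ D s

open Classical in
/-- The interval starting at `k` is extended up to the current stage whenever it is not busy;
`lastFree W D k s` is its right end at stage `s`, and also the stage of its last extension. -/
noncomputable def lastFree (W D : ℕ → Set ℕ) (k : ℕ) : ℕ → ℕ
  | 0 => 0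
  | s + 1 => if IsBusy W D k (lastFree W D k s) (s + 1) then lastFree W D k s else s + 1

theorem lastFree_succ_of_isBusy (h : IsBusy W D k (lastFree W D k s) (s + 1)) :
    lastFree W D k (s + 1) = lastFree W D k s := by
  rw [lastFree, if_pos h]

theorem lastFree_succ_of_not_isBusy (h : ¬ IsBusy W D k (lastFree W D k s) (s + 1)) :
    lastFree W D k (s + 1) = s + 1 := by
  rw [lastFree, if_neg h]

theorem isResetTime_lastFree (W D : ℕ → Set ℕ) (k : ℕ) : IsResetTime (lastFree W D k) where
  le s := by
    induction s with
    | zero => exact le_rfl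
    | succ s ih =>
      by_cases h : IsBusy W D k (lastFree W D k s) (s + 1)
      · exact (lastFree_succ_of_isBusy h).trans_le (ih.trans s.le_succ)
      · exact (lastFree_succ_of_not_isBusy h).le
  eq_or_lt s t hst := by
    induction t, hst using Nat.le_induction with
    | base => exact Or.inl rfl
    | succ t hst ih =>
      by_cases h : IsBusy W D k (lastFree W D k t) (t + 1)
      · rwa [lastFree_succ_of_isBusy h]
      · exact Or.inr ((lastFree_succ_of_not_isBusy h).symm ▸ Nat.lt_succ_of_le hst)

theorem primrec_lastFree (hW : IsEnumeration W) (hD : IsEnumeration D) :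
    Primrec₂ (lastFree W D) := by
  classical
  have hstep : Primrec₂ fun (k : ℕ) (c : ℕ × ℕ) =>
      if IsBusy W D k c.2 (c.1 + 1) then c.2 else c.1 + 1 := by
    have hend : Primrec fun q : ℕ × ℕ × ℕ => q.2.2 := Primrec.snd.comp Primrec.snd
    have hstage : Primrec fun q : ℕ × ℕ × ℕ => q.2.1 + 1 :=
      Primrec.succ.comp (Primrec.fst.comp Primrec.snd)
    refine Primrec.ite (primrecPred_exists_lt hend ?_) hend hstage
    have hstage' := hstage.comp (Primrec.fst (β := ℕ))
    exact (Primrec.nat_le.comp (Primrec.fst.comp Primrec.fst) Primrec.snd).and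
      ((hW.primrecPred_mem hstage' Primrec.snd).and
        ((hW.primrecPred_mem (hend.comp Primrec.fst) Primrec.snd).not.and
          (hD.primrecPred_mem hstage' Primrec.snd).not))
  refine (Primrec.nat_rec (Primrec.const 0) hstep).of_eq fun k s => ?_
  induction s with
  | zero => rfl
  | succ s ih => simp only [lastFree, ih]

theorem mem_of_mem_lastFree (hD : Monotone D) (hk : k ≤ x) (hx : x < lastFree W D k s)
    (hxs : x ∉ W (lastFree W D k s)) (hst : s ≤ t) (hxt : x ∈ W (lastFree W D k t)) : x ∈ D t := by
  induction t, hst using Nat.le_induction with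
  | base => exact absurd hxt hxs
  | succ t hst ih =>
    by_contra hxD
    have hxD' : x ∉ D t := fun h => hxD (hD t.le_succ h)
    have hxW : x ∉ W (lastFree W D k t) := fun h => hxD' (ih h)
    have hlt := hx.trans_le ((isResetTime_lastFree W D k).monotone hst)
    by_cases hbusy : IsBusy W D k (lastFree W D k t) (t + 1)
    · exact hxW (lastFree_succ_of_isBusy hbusy ▸ hxt)
    · exact hbusy ⟨x, hlt, hk, lastFree_succ_of_not_isBusy hbusy ▸ hxt, hxW, hxD⟩

theorem ce_compl_union_of_unbounded_lastFree (hW : IsEnumeration W) (hD : IsEnumeration D)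
    (hunb : ¬ BddAbove (Set.range (lastFree W D k))) : CE ((⋃ s, W s)ᶜ ∪ ⋃ s, D s) := by
  have hlarge : ∀ M, ∃ s, M < lastFree W D k s := by simpa [not_bddAbove_iff] using hunb
  have hfree : CE {x | ∃ s, k ≤ x ∧ x < lastFree W D k s ∧ x ∉ W (lastFree W D k s)} := by
    have hend := (primrec_lastFree hW hD).comp (Primrec.const k) (Primrec.snd (α := ℕ))
    exact CE.of_primrecPred ((Primrec.nat_le.comp (Primrec.const k) Primrec.fst).and
      ((Primrec.nat_lt.comp Primrec.fst hend).and (hW.primrecPred_mem hend Primrec.fst).not))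
  have hsmall : CE (Set.Iio k \ ⋃ s, W s) := CE.of_finite ((Set.finite_Iio k).sdiff)
  convert (hsmall.union hfree).union hD.ce using 1
  refine Set.Subset.antisymm (Set.union_subset_union_left _ fun x hx => ?_)
    (Set.union_subset (Set.union_subset (fun x hx => Or.inl hx.2) ?_) Set.subset_union_right)
  · rcases lt_or_ge x k with hxk | hkx
    · exact Or.inl ⟨hxk, hx⟩
    · obtain ⟨s, hs⟩ := hlarge x
      exact Or.inr ⟨s, hkx, hs, fun h => hx (Set.mem_iUnion_of_mem _ h)⟩
  · rintro x ⟨s, hkx, hxs, hxW⟩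
    refine or_iff_not_imp_left.2 fun hx => ?_
    obtain ⟨u, hu⟩ := Set.mem_iUnion.1 (not_not.1 hx)
    obtain ⟨t, ht⟩ := hlarge (max s u)
    have hst : s ≤ t := (le_max_left s u).trans (ht.le.trans ((isResetTime_lastFree W D k).le t))
    exact Set.mem_iUnion_of_mem t (mem_of_mem_lastFree hD.monotone hkx hxs hxW hst
      (hW.monotone ((le_max_right s u).trans ht.le) hu))

theorem exists_mem_of_lastFree_eq (hD : Monotone D) (hr : ∀ s ≥ r, lastFree W D k s = r) :
    ∃ x < r, k ≤ x ∧ x ∈ ⋃ s, W s ∧ x ∉ W r ∧ x ∉ ⋃ s, D s := by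
  have hbusy : ∀ᶠ s in Filter.atTop,
      ∃ x ∈ Set.Iio r, k ≤ x ∧ x ∈ W (s + 1) ∧ x ∉ W r ∧ x ∉ D (s + 1) := by
    filter_upwards [Filter.eventually_ge_atTop r] with s hs
    by_contra hfree
    rw [← hr s hs] at hfree
    have := (hr (s + 1) (by omega)).symm.trans (lastFree_succ_of_not_isBusy hfree)
    omega
  obtain ⟨x, hxr, hx⟩ := ((Set.finite_Iio r).frequently_exists).1 hbusy.frequently
  obtain ⟨s, hkx, hxW, hxr', -⟩ := hx.exists
  refine ⟨x, hxr, hkx, Set.mem_iUnion_of_mem _ hxW, hxr', fun hxD => ?_⟩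
  obtain ⟨u, hu⟩ := Set.mem_iUnion.1 hxD
  obtain ⟨t, hut, -, -, -, hxt⟩ := hx.forall_exists_of_atTop u
  exact hxt (hD (by omega) hu)

/-- Left end at stage `s` of the `i`-th of a sequence of adjacent intervals, each extended according
to `lastFree`. -/
noncomputable def boundary (W D : ℕ → Set ℕ) : ℕ → ℕ → ℕ :=
  nestedReset fun _ => lastFree W D

/-- The elements entering `W` at a stage up to `s` inside the `i`-th interval of that stage. -/
def block (W D : ℕ → Set ℕ) (i s : ℕ) : Set ℕ :=
  {x | ∃ u < s, (x ∈ W (u + 1) ∧ x ∉ W u) ∧ boundary W D i u ≤ x ∧ x < boundary W D (i + 1) u}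

theorem isUniformEnumeration_block (hW : IsEnumeration W) (hD : IsEnumeration D) :
    IsUniformEnumeration (block W D) := by
  refine ⟨fun i s t hst x => fun ⟨u, hu, hx⟩ => ⟨u, hu.trans_le hst, hx⟩, ?_⟩
  refine primrecPred_exists_lt (Primrec.fst.comp Primrec.snd) ?_
  have hi : Primrec fun q : (ℕ × ℕ × ℕ) × ℕ => q.1.1 := Primrec.fst.comp Primrec.fst
  have hx : Primrec fun q : (ℕ × ℕ × ℕ) × ℕ => q.1.2.2 :=
    Primrec.snd.comp (Primrec.snd.comp Primrec.fst)
  have hboundary := fun {i : (ℕ × ℕ × ℕ) × ℕ → ℕ} (hi : Primrec i) =>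
    primrec_nestedReset (g := fun _ => lastFree W D)
      ((primrec_lastFree hW hD).comp (Primrec.fst.comp Primrec.snd)
        (Primrec.snd.comp Primrec.snd)) hi Primrec.snd
  exact ((hW.primrecPred_mem (Primrec.succ.comp Primrec.snd) hx).and
    (hW.primrecPred_mem Primrec.snd hx).not).and ((Primrec.nat_le.comp (hboundary hi) hx).and
      (Primrec.nat_lt.comp hx (hboundary (Primrec.succ.comp hi))))

theorem pairwise_disjoint_block (hW : Monotone W) :
    Pairwise (Function.onFun Disjoint fun i => ⋃ s, block W D i s) := by
  refine pairwise_disjoint_on _ |>.2 fun i j hij => Set.disjoint_left.2 fun x hxi hxj => ?_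
  obtain ⟨-, u, -, hu, -, hlt⟩ := Set.mem_iUnion.1 hxi
  obtain ⟨-, v, -, hv, hle, -⟩ := Set.mem_iUnion.1 hxj
  obtain rfl : u = v :=
    le_antisymm (le_of_not_gt fun h => hu.2 (hW h hv.1)) (le_of_not_gt fun h => hv.2 (hW h hu.1))
  exact (hlt.trans_le (monotone_nestedReset u hij)).not_ge hle

theorem not_block_subset (hW : Monotone W) (hD : Monotone D)
    (hb : ∀ k, BddAbove (Set.range (lastFree W D k))) (i : ℕ) :
    ¬ (⋃ s, block W D i s) ⊆ ⋃ s, D s := by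
  have hreset := fun _ : ℕ => isResetTime_lastFree W D
  obtain ⟨T, hT⟩ := exists_nestedReset_eq hreset fun _ => hb
  obtain ⟨r, hr⟩ := (hreset i (T i)).exists_eq_of_bddAbove (hb (T i))
  obtain ⟨x, hxr, hTx, hxW, hxr', hxD⟩ := exists_mem_of_lastFree_eq hD hr
  have hentry : ∃ u ≥ r, x ∈ W (u + 1) ∧ x ∉ W u := by
    by_contra! hstay
    obtain ⟨v, hv⟩ := Set.mem_iUnion.1 hxW
    have hnever : ∀ u ≥ r, x ∉ W u := fun u hu =>
      Nat.le_induction hxr' (fun u hu hxu h => hxu (hstay u hu h)) u hu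
    exact hnever (max r v) (le_max_left r v) (hW (le_max_right r v) hv)
  obtain ⟨u, hru, hu⟩ := hentry
  have hi : boundary W D i u = T i := hT i u (by omega)
  have hi' : boundary W D (i + 1) u = max (boundary W D i u) r := by
    rw [← hr u hru, ← hi]
    rfl
  exact fun hsub => hxD (hsub (Set.mem_iUnion_of_mem (u + 1)
    ⟨u, u.lt_succ_self, hu, hi.trans_le hTx, hi' ▸ lt_max_of_lt_right hxr⟩))

theorem exists_disjoint_enumeration (hW : IsEnumeration W) (hD : IsEnumeration D)
    (h : ¬ CE ((⋃ s, W s)ᶜ ∪ ⋃ s, D s)) :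
    ∃ F, IsUniformEnumeration F ∧ Pairwise (Function.onFun Disjoint fun k => ⋃ s, F k s) ∧
      ∀ k, ¬ (⋃ s, F k s) ⊆ ⋃ s, D s := by
  have hb : ∀ k, BddAbove (Set.range (lastFree W D k)) := fun k =>
    not_not.1 fun hk => h (ce_compl_union_of_unbounded_lastFree hW hD hk)
  exact ⟨block W D, isUniformEnumeration_block hW hD, pairwise_disjoint_block hW.monotone,
    not_block_subset hW.monotone hD.monotone hb⟩

end DisjointBlocks

section Limits

variable {A D : ℕ → Set ℕ} {b : ℕ}

theorem eventually_mem_iff_mem_iUnion (hA : Monotone A) (x : ℕ) :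
    ∀ᶠ s in Filter.atTop, (x ∈ A s ↔ x ∈ ⋃ s, A s) := by
  by_cases hx : x ∈ ⋃ s, A s
  · obtain ⟨u, hu⟩ := Set.mem_iUnion.1 hx
    filter_upwards [Filter.eventually_ge_atTop u] with s hs
    exact iff_of_true (hA hs hu) hx
  · exact Filter.Eventually.of_forall fun s =>
      iff_of_false (fun h => hx (Set.mem_iUnion_of_mem s h)) hx

theorem eventually_isLeast_sdiff (hA : Monotone A) (hD : Monotone D)
    (hb : IsLeast ((⋃ s, A s) \ ⋃ s, D s) b) :
    ∀ᶠ s in Filter.atTop, IsLeast (A s \ D s) b := by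
  have hsettled : ∀ᶠ s in Filter.atTop, ∀ y ∈ Set.Iic b,
      (y ∈ A s ↔ y ∈ ⋃ s, A s) ∧ (y ∈ D s ↔ y ∈ ⋃ s, D s) :=
    (Set.finite_Iic b).eventually_all.2 fun y _ =>
      (eventually_mem_iff_mem_iUnion hA y).and (eventually_mem_iff_mem_iUnion hD y)
  filter_upwards [hsettled] with s hs
  refine ⟨⟨(hs b Set.self_mem_Iic).1.2 hb.1.1, fun h => hb.1.2 ((hs b Set.self_mem_Iic).2.1 h)⟩,
    fun y hy => ?_⟩
  by_contra! hyb
  exact hyb.not_ge (hb.2 ⟨(hs y hyb.le).1.1 hy.1, fun h => hy.2 ((hs y hyb.le).2.2 h)⟩)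

theorem finite_setOf_isLeast_sdiff (hA : Monotone A) (hD : Monotone D)
    (hb : IsLeast ((⋃ s, A s) \ ⋃ s, D s) b) : {x | ∃ s, IsLeast (A s \ D s) x}.Finite := by
  obtain ⟨u, hu⟩ := Filter.eventually_atTop.1 (eventually_isLeast_sdiff hA hD hb)
  have hearly : (⋃ s ∈ Set.Iio u, {x | IsLeast (A s \ D s) x}).Finite :=
    (Set.finite_Iio u).biUnion fun s _ => Set.Subsingleton.finite fun _ hx _ hy => hx.unique hy
  refine (hearly.insert b).subset fun x ⟨s, hs⟩ => ?_
  rcases lt_or_ge s u with hsu | hus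
  · exact Or.inr (Set.mem_biUnion hsu hs)
  · exact Or.inl (hs.unique (hu s hus))

end Limits

section LastChange

variable {P : ℕ → ℕ → ℕ → Prop} {Q : ℕ → ℕ → Prop} {e i m s t : ℕ}

open Classical in
/-- The last stage up to `s` at which one of `P 0 k, …, P i k` changed its truth value, where
`k` codes the pair `(i, m)`. -/
noncomputable def lastChange (P : ℕ → ℕ → ℕ → Prop) (i m s : ℕ) : ℕ :=
  Nat.findGreatest
    (fun u => ∃ e < i + 1, ¬ (P e (Nat.pair i m) (u - 1) ↔ P e (Nat.pair i m) u)) s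

theorem isResetTime_lastChange (P : ℕ → ℕ → ℕ → Prop) (i m : ℕ) :
    IsResetTime (lastChange P i m) := by
  classical exact isResetTime_findGreatest _

theorem primrec_lastChange (hP : PrimrecPred fun c : ℕ × ℕ × ℕ => P c.1 c.2.1 c.2.2) :
    Primrec fun c : ℕ × ℕ × ℕ => lastChange P c.1 c.2.1 c.2.2 := by
  classical
  refine Primrec.nat_findGreatest (Primrec.snd.comp Primrec.snd) ?_
  refine primrecPred_exists_lt (Primrec.succ.comp (Primrec.fst.comp Primrec.fst)) ?_
  have hk : Primrec fun q : ((ℕ × ℕ × ℕ) × ℕ) × ℕ => Nat.pair q.1.1.1 q.1.1.2.1 :=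
    Primrec₂.natPair.comp (Primrec.fst.comp (Primrec.fst.comp Primrec.fst))
      (Primrec.fst.comp (Primrec.snd.comp (Primrec.fst.comp Primrec.fst)))
  have hu : Primrec fun q : ((ℕ × ℕ × ℕ) × ℕ) × ℕ => q.1.2 := Primrec.snd.comp Primrec.fst
  exact (primrecPred_iff
    (hP.comp (Primrec.snd.pair (hk.pair (Primrec.nat_sub.comp hu (Primrec.const 1)))))
    (hP.comp (Primrec.snd.pair (hk.pair hu)))).not

theorem bddAbove_range_lastChange (hP : ∀ e k, ∀ᶠ s in Filter.atTop, (P e k s ↔ Q e k)) (i m : ℕ) :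
    BddAbove (Set.range (lastChange P i m)) := by
  classical
  have hsettled := ((Set.finite_Iio (i + 1)).eventually_all).2 fun e _ => hP e (Nat.pair i m)
  obtain ⟨N, hN⟩ := Filter.eventually_atTop.1 hsettled
  refine ⟨N, ?_⟩
  rintro _ ⟨s, rfl⟩
  by_contra! hlt
  obtain ⟨e, he, hchange⟩ := Nat.findGreatest_of_ne_zero rfl (Nat.ne_zero_of_lt hlt)
  exact hchange ((hN _ (Nat.le_sub_one_of_lt hlt) e he).trans (hN _ hlt.le e he).symm)

theorem iff_of_lastChange_le (hst : s ≤ t) (hlast : lastChange P i m t ≤ s) (he : e ≤ i) :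
    P e (Nat.pair i m) t ↔ P e (Nat.pair i m) s := by
  classical
  induction t, hst using Nat.le_induction with
  | base => rfl
  | succ t hst ih =>
    refine Iff.trans ?_ (ih (((isResetTime_lastChange P i m).monotone t.le_succ).trans hlast))
    by_contra hchange
    have hlate : t + 1 ≤ lastChange P i m (t + 1) :=
      Nat.le_findGreatest le_rfl ⟨e, Nat.lt_succ_of_le he, fun h => hchange h.symm⟩
    exact (hlate.trans hlast).not_gt (Nat.lt_succ_of_le hst)

theorem iff_limit_of_nestedReset_eq {T : ℕ → ℕ} {j : ℕ}
    (hP : ∀ e k, ∀ᶠ s in Filter.atTop, (P e k s ↔ Q e k))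
    (hT : ∀ i, ∀ s ≥ T i, nestedReset (lastChange P) i s = T i)
    (hs : nestedReset (lastChange P) i s = T i) (hji : j < i) (he : e ≤ j) :
    P e (Nat.pair j (T j)) s ↔ Q e (Nat.pair j (T j)) := by
  obtain ⟨t, ht, hst⟩ := ((hP e (Nat.pair j (T j))).and (Filter.eventually_ge_atTop s)).exists
  have hs' := nestedReset_eq_of_le (isResetTime_lastChange P) hT hs hji
  have hlast := le_of_nestedReset_succ_eq (isResetTime_lastChange P) hT hs' hst
  exact (iff_of_lastChange_le hst hlast he).symm.trans ht

end LastChange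

section Intact

/-- Requirement `e`, which is looked after by the positions from `2 * e` on, holds at all of these
below `i`. -/
def IsIntact (S : ℕ → ℕ → Prop) (e i : ℕ) : Prop :=
  2 * e ≤ i ∧ ∀ j < i, 2 * e ≤ j → S e j

theorem infinite_setOf_forall_isIntact_imp (S : ℕ → ℕ → Prop) :
    {i | ∀ e, IsIntact S e i → S e i}.Infinite := by
  intro hfin
  obtain ⟨N, hN⟩ := hfin.bddAbove
  have hbad : ∀ i ∈ Finset.Ioc N (2 * N + 3), ∃ e, IsIntact S e i ∧ ¬ S e i := by
    intro i hi
    by_contra! hgood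
    exact (Finset.mem_Ioc.1 hi).1.not_ge (hN hgood)
  choose! e he using hbad
  have hmaps : ∀ i ∈ Finset.Ioc N (2 * N + 3), e i ∈ Finset.range (N + 2) := fun i hi => by
    have := (he i hi).1.1
    have := Finset.mem_Ioc.1 hi
    exact Finset.mem_range.2 (by omega)
  obtain ⟨i, hi, j, hj, hne, heq⟩ := Finset.exists_ne_map_eq_of_card_lt_of_maps_to
    (by simp; omega) hmaps
  have hfail : ∀ i ∈ Finset.Ioc N (2 * N + 3), ∀ j ∈ Finset.Ioc N (2 * N + 3), i < j →
      e i ≠ e j := fun i hi j hj hij heq =>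
    (he i hi).2 (heq ▸ (he j hj).1.2 i hij (heq ▸ (he i hi).1.1))
  exact hne.lt_or_gt.elim (fun h => hfail i hi j hj h heq) fun h => hfail j hj i hi h heq.symm

end Intact

section MajorSubset

variable {F V : ℕ → ℕ → Set ℕ} {D : ℕ → Set ℕ} {b T : ℕ → ℕ} {e i j s x : ℕ}

/-- At stage `s`, the candidate of block `F k` has been enumerated into the `e`-th set `V e`. -/
def CandidateMem (F V : ℕ → ℕ → Set ℕ) (D : ℕ → Set ℕ) (e k s : ℕ) : Prop :=
  ∃ x < s, IsLeast (F k s \ D s) x ∧ x ∈ V e s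

/-- The reset time of the `i`-th marker, which moves whenever for some `e ≤ j < i` the answer to
`CandidateMem` changes for the index `e` and the block carrying the `j`-th marker. -/
noncomputable def marker (F V : ℕ → ℕ → Set ℕ) (D : ℕ → Set ℕ) : ℕ → ℕ → ℕ :=
  nestedReset (lastChange (CandidateMem F V D))

/-- `x` is the candidate of the block carrying the `i`-th marker at stage `s`. The block is coded by
`i` and the reset time, so that each reset puts the marker on a new block. -/
def IsMarked (F V : ℕ → ℕ → Set ℕ) (D : ℕ → Set ℕ) (i s x : ℕ) : Prop :=
  IsLeast (F (Nat.pair i (marker F V D i s)) s \ D s) x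

/-- The candidates abandoned by a marker. -/
def dumped (F V : ℕ → ℕ → Set ℕ) (D : ℕ → Set ℕ) : Set ℕ :=
  {x | ∃ i s t, s ≤ t ∧ IsMarked F V D i s x ∧ marker F V D i t ≠ marker F V D i s}

/-- The candidates which, at some stage while they are marked, belong to every `V e` containing
the marked candidates of the positions from `2 * e` on below theirs. -/
def passed (F V : ℕ → ℕ → Set ℕ) (D : ℕ → Set ℕ) : Set ℕ :=
  {x | ∃ i s, IsMarked F V D i s x ∧
    ∀ e, IsIntact (fun e j => CandidateMem F V D e (Nat.pair j (marker F V D j s)) s) e i →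
      x ∈ V e s}

section Computability

variable {α : Type*} [Primcodable α]

theorem primrecPred_isLeast_sdiff (hF : IsUniformEnumeration F) (hD : IsEnumeration D)
    {k s x : α → ℕ} (hk : Primrec k) (hs : Primrec s) (hx : Primrec x) :
    PrimrecPred fun a => IsLeast (F (k a) (s a) \ D (s a)) (x a) := by
  have hmem := fun {β : Type _} [Primcodable β] {k s x : β → ℕ} (hk : Primrec k)
    (hs : Primrec s) (hx : Primrec x) =>
      (hF.primrecPred_mem hk hs hx).and (hD.primrecPred_mem hs hx).not
  have hmin := primrecPred_forall_lt (r := fun a y => ¬ (y ∈ F (k a) (s a) ∧ y ∉ D (s a))) hx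
    (hmem (hk.comp Primrec.fst) (hs.comp Primrec.fst) Primrec.snd).not
  refine ((hmem hk hs hx).and hmin).of_eq fun a => and_congr_right fun _ => ?_
  exact ⟨fun h y hy => le_of_not_gt fun hyx => h y hyx hy, fun h y hyx hy => (h hy).not_gt hyx⟩

theorem primrecPred_candidateMem (hF : IsUniformEnumeration F) (hV : IsUniformEnumeration V)
    (hD : IsEnumeration D) :
    PrimrecPred fun c : ℕ × ℕ × ℕ => CandidateMem F V D c.1 c.2.1 c.2.2 := by
  have he : Primrec fun q : (ℕ × ℕ × ℕ) × ℕ => q.1.1 := Primrec.fst.comp Primrec.fst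
  have hk : Primrec fun q : (ℕ × ℕ × ℕ) × ℕ => q.1.2.1 :=
    Primrec.fst.comp (Primrec.snd.comp Primrec.fst)
  have hs : Primrec fun q : (ℕ × ℕ × ℕ) × ℕ => q.1.2.2 :=
    Primrec.snd.comp (Primrec.snd.comp Primrec.fst)
  exact primrecPred_exists_lt (Primrec.snd.comp Primrec.snd)
    ((primrecPred_isLeast_sdiff hF hD hk hs Primrec.snd).and (hV.primrecPred_mem he hs Primrec.snd))

theorem primrec_marker (hF : IsUniformEnumeration F) (hV : IsUniformEnumeration V)
    (hD : IsEnumeration D) {i s : α → ℕ} (hi : Primrec i) (hs : Primrec s) :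
    Primrec fun a => marker F V D (i a) (s a) :=
  primrec_nestedReset (primrec_lastChange (primrecPred_candidateMem hF hV hD)) hi hs

theorem primrecPred_isMarked (hF : IsUniformEnumeration F) (hV : IsUniformEnumeration V)
    (hD : IsEnumeration D) {i s x : α → ℕ} (hi : Primrec i) (hs : Primrec s) (hx : Primrec x) :
    PrimrecPred fun a => IsMarked F V D (i a) (s a) (x a) :=
  primrecPred_isLeast_sdiff hF hD (Primrec₂.natPair.comp hi (primrec_marker hF hV hD hi hs)) hs hx

theorem ce_dumped (hF : IsUniformEnumeration F) (hV : IsUniformEnumeration V)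
    (hD : IsEnumeration D) : CE (dumped F V D) := by
  have hi : Primrec fun c : ℕ × ℕ × ℕ × ℕ => c.2.1 := Primrec.fst.comp Primrec.snd
  have hs : Primrec fun c : ℕ × ℕ × ℕ × ℕ => c.2.2.1 :=
    Primrec.fst.comp (Primrec.snd.comp Primrec.snd)
  have ht : Primrec fun c : ℕ × ℕ × ℕ × ℕ => c.2.2.2 :=
    Primrec.snd.comp (Primrec.snd.comp Primrec.snd)
  have h := CE.of_primrecPred (r := fun x (y : ℕ × ℕ × ℕ) => y.2.1 ≤ y.2.2 ∧
      IsMarked F V D y.1 y.2.1 x ∧ marker F V D y.1 y.2.2 ≠ marker F V D y.1 y.2.1)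
    ((Primrec.nat_le.comp hs ht).and ((primrecPred_isMarked hF hV hD hi hs Primrec.fst).and
      (Primrec.eq.comp (primrec_marker hF hV hD hi ht) (primrec_marker hF hV hD hi hs)).not))
  simpa only [dumped, Prod.exists] using h

theorem primrecPred_isIntact {S : α → ℕ → ℕ → Prop} {e i : α → ℕ}
    (hS : PrimrecPred fun c : α × ℕ × ℕ => S c.1 c.2.1 c.2.2) (he : Primrec e) (hi : Primrec i) :
    PrimrecPred fun a => IsIntact (S a) (e a) (i a) := by
  have htwo : Primrec fun a => 2 * e a := Primrec.nat_mul.comp (Primrec.const 2) he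
  exact (Primrec.nat_le.comp htwo hi).and (primrecPred_forall_lt hi
    (primrecPred_imp (Primrec.nat_le.comp (htwo.comp Primrec.fst) Primrec.snd)
      (hS.comp (Primrec.fst.pair ((he.comp Primrec.fst).pair Primrec.snd)))))

theorem ce_passed (hF : IsUniformEnumeration F) (hV : IsUniformEnumeration V)
    (hD : IsEnumeration D) : CE (passed F V D) := by
  have hi : Primrec fun c : ℕ × ℕ × ℕ => c.2.1 := Primrec.fst.comp Primrec.snd
  have hs : Primrec fun c : ℕ × ℕ × ℕ => c.2.2 := Primrec.snd.comp Primrec.snd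
  have hintact : PrimrecPred fun q : (ℕ × ℕ × ℕ) × ℕ => IsIntact (fun e j =>
      CandidateMem F V D e (Nat.pair j (marker F V D j q.1.2.2)) q.1.2.2) q.2 q.1.2.1 := by
    refine primrecPred_isIntact ?_ Primrec.snd (hi.comp Primrec.fst)
    have hj : Primrec fun r : ((ℕ × ℕ × ℕ) × ℕ) × ℕ × ℕ => r.2.2 := Primrec.snd.comp Primrec.snd
    have hs' := hs.comp (Primrec.fst.comp (Primrec.fst (α := (ℕ × ℕ × ℕ) × ℕ) (β := ℕ × ℕ)))
    exact (primrecPred_candidateMem hF hV hD).comp ((Primrec.fst.comp Primrec.snd).pair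
      ((Primrec₂.natPair.comp hj (primrec_marker hF hV hD hj hs')).pair hs'))
  have hpass := primrecPred_forall_lt (r := fun (c : ℕ × ℕ × ℕ) e => IsIntact (fun e j =>
      CandidateMem F V D e (Nat.pair j (marker F V D j c.2.2)) c.2.2) e c.2.1 → c.1 ∈ V e c.2.2)
    (Primrec.succ.comp hi) (primrecPred_imp hintact
      (hV.primrecPred_mem Primrec.snd (hs.comp Primrec.fst) (Primrec.fst.comp Primrec.fst)))
  have h := CE.of_primrecPred (r := fun x (y : ℕ × ℕ) => IsMarked F V D y.1 y.2 x ∧ ∀ e, IsIntact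
      (fun e j => CandidateMem F V D e (Nat.pair j (marker F V D j y.2)) y.2) e y.1 → x ∈ V e y.2)
    (((primrecPred_isMarked hF hV hD hi hs Primrec.fst).and hpass).of_eq fun c =>
      and_congr_right fun _ => ⟨fun h e he => h e (by have := he.1; omega) he, fun h e _ => h e⟩)
  simpa only [passed, Prod.exists] using h

end Computability

theorem eventually_candidateMem_iff (hF : ∀ k, Monotone (F k)) (hV : ∀ e, Monotone (V e))
    (hD : Monotone D) (hb : ∀ k, IsLeast ((⋃ s, F k s) \ ⋃ s, D s) (b k)) (e k : ℕ) :
    ∀ᶠ s in Filter.atTop, (CandidateMem F V D e k s ↔ b k ∈ ⋃ s, V e s) := by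
  filter_upwards [eventually_isLeast_sdiff (hF k) hD (hb k),
    eventually_mem_iff_mem_iUnion (hV e) (b k), Filter.eventually_gt_atTop (b k)] with s hs hmem hlt
  rw [← hmem]
  exact ⟨fun ⟨x, _, hx, hxV⟩ => hx.unique hs ▸ hxV, fun h => ⟨b k, hlt, hs, h⟩⟩

theorem eventually_isMarked (hF : ∀ k, Monotone (F k)) (hD : Monotone D)
    (hb : ∀ k, IsLeast ((⋃ s, F k s) \ ⋃ s, D s) (b k))
    (hT : ∀ i, ∀ s ≥ T i, marker F V D i s = T i) (i : ℕ) :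
    ∀ᶠ s in Filter.atTop, IsMarked F V D i s (b (Nat.pair i (T i))) := by
  filter_upwards [eventually_isLeast_sdiff (hF _) hD (hb _), Filter.eventually_ge_atTop (T i)]
    with s hs hTs
  rwa [IsMarked, hT i s hTs]

theorem isResetTime_marker (F V : ℕ → ℕ → Set ℕ) (D : ℕ → Set ℕ) (i : ℕ) :
    IsResetTime (marker F V D i) :=
  isResetTime_nestedReset (isResetTime_lastChange _) i

theorem eq_and_marker_eq_of_isMarked
    (hdisj : Pairwise (Function.onFun Disjoint fun k => ⋃ s, F k s)) {m : ℕ}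
    (hx : IsMarked F V D i s x) (hxF : x ∈ ⋃ s, F (Nat.pair j m) s) :
    i = j ∧ marker F V D i s = m :=
  Nat.pair_eq_pair.1 (hdisj.eq (Set.not_disjoint_iff.2 ⟨x, Set.mem_iUnion_of_mem s hx.1.1, hxF⟩))

theorem limit_notMem_union_dumped (hb : ∀ k, IsLeast ((⋃ s, F k s) \ ⋃ s, D s) (b k))
    (hdisj : Pairwise (Function.onFun Disjoint fun k => ⋃ s, F k s))
    (hT : ∀ i, ∀ s ≥ T i, marker F V D i s = T i) (i : ℕ) :
    b (Nat.pair i (T i)) ∉ (⋃ s, D s) ∪ dumped F V D := by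
  rintro (h | ⟨j, s, t, hst, hmarked, hmove⟩)
  · exact (hb _).1.2 h
  · obtain ⟨rfl, hs⟩ := eq_and_marker_eq_of_isMarked hdisj hmarked (hb _).1.1
    exact hmove (((isResetTime_marker F V D j).eq_of_eq_limit (hT j) hs hst).trans hs.symm)

theorem exists_of_mem_passed_of_notMem_dumped (hF : ∀ k, Monotone (F k)) (hV : ∀ e, Monotone (V e))
    (hD : Monotone D) (hb : ∀ k, IsLeast ((⋃ s, F k s) \ ⋃ s, D s) (b k))
    (hT : ∀ i, ∀ s ≥ T i, marker F V D i s = T i) (hx : x ∈ passed F V D)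
    (hxd : x ∉ dumped F V D) :
    ∃ i s, marker F V D i s = T i ∧ IsMarked F V D i s x ∧
      ∀ e, IsIntact (fun e j => b (Nat.pair j (T j)) ∈ ⋃ s, V e s) e i → x ∈ ⋃ s, V e s := by
  obtain ⟨i, s, hmarked, hpass⟩ := hx
  have hs : marker F V D i s = T i := by
    by_contra hne
    refine hxd ⟨i, s, max s (T i), le_max_left _ _, hmarked, ?_⟩
    rw [hT i _ (le_max_right _ _)]
    exact Ne.symm hne
  refine ⟨i, s, hs, hmarked, fun e he =>
    Set.mem_iUnion_of_mem s (hpass e ⟨he.1, fun j hji hej => ?_⟩)⟩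
  change CandidateMem F V D e (Nat.pair j (marker F V D j s)) s
  rw [show marker F V D j s = T j from nestedReset_eq_of_le (isResetTime_lastChange _) hT hs hji.le]
  exact (iff_limit_of_nestedReset_eq (eventually_candidateMem_iff hF hV hD hb) hT hs hji
    (by omega)).2 (he.2 j hji hej)

theorem limit_mem_passed (hF : ∀ k, Monotone (F k)) (hV : ∀ e, Monotone (V e)) (hD : Monotone D)
    (hb : ∀ k, IsLeast ((⋃ s, F k s) \ ⋃ s, D s) (b k))
    (hT : ∀ i, ∀ s ≥ T i, marker F V D i s = T i)
    (hi : ∀ e, IsIntact (fun e j => b (Nat.pair j (T j)) ∈ ⋃ s, V e s) e i →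
      b (Nat.pair i (T i)) ∈ ⋃ s, V e s) : b (Nat.pair i (T i)) ∈ passed F V D := by
  have hmarker : ∀ᶠ s in Filter.atTop, ∀ j < i, marker F V D j s = T j :=
    (Set.finite_Iio i).eventually_all.2 fun j _ => (Filter.eventually_ge_atTop (T j)).mono (hT j)
  have hsettled : ∀ᶠ s in Filter.atTop, ∀ e ≤ i, ∀ j < i,
      (CandidateMem F V D e (Nat.pair j (T j)) s ↔ b (Nat.pair j (T j)) ∈ ⋃ s, V e s) :=
    (Set.finite_Iic i).eventually_all.2 fun e _ => (Set.finite_Iio i).eventually_all.2 fun j _ =>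
      eventually_candidateMem_iff hF hV hD hb e _
  have hmem : ∀ᶠ s in Filter.atTop, ∀ e ≤ i,
      (b (Nat.pair i (T i)) ∈ V e s ↔ b (Nat.pair i (T i)) ∈ ⋃ s, V e s) :=
    (Set.finite_Iic i).eventually_all.2 fun e _ => eventually_mem_iff_mem_iUnion (hV e) _
  obtain ⟨s, hmarked, hmarker, hsettled, hmem⟩ :=
    ((eventually_isMarked hF hD hb hT i).and (hmarker.and (hsettled.and hmem))).exists
  refine ⟨i, s, hmarked, fun e he => ?_⟩
  have hei : e ≤ i := by have := he.1; omega
  refine (hmem e hei).2 (hi e ⟨he.1, fun j hji hej => (hsettled e hei j hji).1 ?_⟩)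
  exact hmarker j hji ▸ he.2 j hji hej

theorem infinite_passed_sdiff (hF : ∀ k, Monotone (F k)) (hV : ∀ e, Monotone (V e))
    (hD : Monotone D) (hb : ∀ k, IsLeast ((⋃ s, F k s) \ ⋃ s, D s) (b k))
    (hdisj : Pairwise (Function.onFun Disjoint fun k => ⋃ s, F k s))
    (hT : ∀ i, ∀ s ≥ T i, marker F V D i s = T i) :
    (passed F V D \ ((⋃ s, D s) ∪ dumped F V D)).Infinite := by
  have hinj : Function.Injective fun i => b (Nat.pair i (T i)) := by
    intro i j (hij : b (Nat.pair i (T i)) = b (Nat.pair j (T j)))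
    have hmem : b (Nat.pair i (T i)) ∈ ⋃ s, F (Nat.pair j (T j)) s := hij ▸ (hb _).1.1
    exact (Nat.pair_eq_pair.1 (hdisj.eq (Set.not_disjoint_iff.2 ⟨_, (hb _).1.1, hmem⟩))).1
  have hinf := infinite_setOf_forall_isIntact_imp fun e j => b (Nat.pair j (T j)) ∈ ⋃ s, V e s
  refine (hinf.image hinj.injOn).mono ?_
  rintro _ ⟨i, hi, rfl⟩
  exact ⟨limit_mem_passed hF hV hD hb hT hi, limit_notMem_union_dumped hb hdisj hT i⟩

theorem limit_mem_of_union_eq_univ (hF : ∀ k, Monotone (F k)) (hV : ∀ e, Monotone (V e))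
    (hD : Monotone D) (hb : ∀ k, IsLeast ((⋃ s, F k s) \ ⋃ s, D s) (b k))
    (hdisj : Pairwise (Function.onFun Disjoint fun k => ⋃ s, F k s))
    (hT : ∀ i, ∀ s ≥ T i, marker F V D i s = T i)
    (hcover : (⋃ s, D s) ∪ dumped F V D ∪ passed F V D ∪ (⋃ s, V e s) = Set.univ)
    (hei : 2 * e ≤ i) : b (Nat.pair i (T i)) ∈ ⋃ s, V e s := by
  induction i using Nat.strong_induction_on with
  | _ i ih =>
    have hnot := limit_notMem_union_dumped hb hdisj hT i
    rcases hcover.ge (Set.mem_univ (b (Nat.pair i (T i)))) with (h | hpassed) | h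
    · exact absurd h hnot
    · obtain ⟨j, s, -, hmarked, hmem⟩ := exists_of_mem_passed_of_notMem_dumped hF hV hD hb hT
        hpassed fun h => hnot (Or.inr h)
      obtain ⟨rfl, -⟩ := eq_and_marker_eq_of_isMarked hdisj hmarked (hb _).1.1
      exact hmem e ⟨hei, ih⟩
    · exact h

theorem finite_compl_of_union_eq_univ (hF : ∀ k, Monotone (F k)) (hV : ∀ e, Monotone (V e))
    (hD : Monotone D) (hb : ∀ k, IsLeast ((⋃ s, F k s) \ ⋃ s, D s) (b k))
    (hdisj : Pairwise (Function.onFun Disjoint fun k => ⋃ s, F k s))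
    (hT : ∀ i, ∀ s ≥ T i, marker F V D i s = T i)
    (hcover : (⋃ s, D s) ∪ dumped F V D ∪ passed F V D ∪ (⋃ s, V e s) = Set.univ) :
    ((⋃ s, D s) ∪ dumped F V D ∪ (⋃ s, V e s))ᶜ.Finite := by
  have hearly : (⋃ i ∈ Set.Iio (2 * e),
      {x | ∃ s, IsLeast (F (Nat.pair i (T i)) s \ D s) x}).Finite :=
    (Set.finite_Iio _).biUnion fun i _ => finite_setOf_isLeast_sdiff (hF _) hD (hb _)
  refine hearly.subset fun x hx => ?_
  have hpassed : x ∈ passed F V D := by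
    rcases hcover.ge (Set.mem_univ x) with (h | h) | h
    exacts [absurd (Or.inl h) hx, h, absurd (Or.inr h) hx]
  obtain ⟨i, s, hs, hmarked, hmem⟩ := exists_of_mem_passed_of_notMem_dumped hF hV hD hb hT
    hpassed fun h => hx (Or.inl (Or.inr h))
  have hi : i < 2 * e := by
    by_contra! hei
    exact hx (Or.inr (hmem e ⟨hei, fun j _ hej =>
      limit_mem_of_union_eq_univ hF hV hD hb hdisj hT hcover hej⟩))
  exact Set.mem_biUnion hi ⟨s, hs ▸ hmarked⟩

theorem exists_majorSubset_of_disjoint_enumeration (hF : IsUniformEnumeration F)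
    (hD : IsEnumeration D) (hdisj : Pairwise (Function.onFun Disjoint fun k => ⋃ s, F k s))
    (hsub : ∀ k, ¬ (⋃ s, F k s) ⊆ ⋃ s, D s) :
    ∃ B A : Set ℕ, CE B ∧ CE A ∧ (⋃ s, D s) ⊆ B ∧ MajorSubset B A := by
  obtain ⟨V, hV, huniv⟩ := exists_universal_enumeration
  have hleast : ∀ k, ∃ x, IsLeast ((⋃ s, F k s) \ ⋃ s, D s) x := fun k =>
    ⟨_, isLeast_csInf (Set.sdiff_nonempty.2 (hsub k))⟩
  choose b hb using hleast
  obtain ⟨T, hT⟩ := exists_nestedReset_eq (isResetTime_lastChange _)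
    (bddAbove_range_lastChange (eventually_candidateMem_iff hF.monotone hV.monotone hD.monotone hb))
  have hB : CE ((⋃ s, D s) ∪ dumped F V D) := hD.ce.union (ce_dumped hF hV hD)
  refine ⟨_, _, hB, hB.union (ce_passed hF hV hD), Set.subset_union_left, Set.subset_union_left,
    ?_, fun W hW hcover => ?_⟩
  · rw [Set.union_sdiff_left]
    exact infinite_passed_sdiff hF.monotone hV.monotone hD.monotone hb hdisj hT
  · obtain ⟨e, rfl⟩ := huniv W hW
    rw [← Set.compl_eq_univ_sdiff]
    exact finite_compl_of_union_eq_univ hF.monotone hV.monotone hD.monotone hb hdisj hT hcover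

end MajorSubset

/-- If `D` is c.e. and there is a c.e. set `W ⊇ D` such that
`(ℕ ∖ W) ∪ D` is not c.e. (i.e. the lattice of c.e. supersets of `D` is not a
boolean algebra), then there are c.e. sets `D̃`, `Ã` with `D ⊆ D̃ ⊆ Ã` and
`D̃ ⊂ₘ Ã`. -/
theorem stmt15 (D : Set ℕ) (hD : CE D)
    (hnotBA : ∃ W : Set ℕ, CE W ∧ D ⊆ W ∧ ¬ CE ((Set.univ \ W) ∪ D)) :
    ∃ Dt At : Set ℕ, CE Dt ∧ CE At ∧ D ⊆ Dt ∧ Dt ⊆ At ∧ MajorSubset Dt At := by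
  obtain ⟨W, hW, -, h⟩ := hnotBA
  obtain ⟨V, hV, huniv⟩ := exists_universal_enumeration
  obtain ⟨d, rfl⟩ := huniv D hD
  obtain ⟨w, rfl⟩ := huniv W hW
  rw [← Set.compl_eq_univ_sdiff] at h
  obtain ⟨F, hF, hdisj, hsub⟩ :=
    exists_disjoint_enumeration (hV.isEnumeration w) (hV.isEnumeration d) h
  obtain ⟨B, A, hB, hA, hDB, hBA⟩ :=
    exists_majorSubset_of_disjoint_enumeration hF (hV.isEnumeration d) hdisj hsub
  exact ⟨B, A, hB, hA, hDB, hBA.1, hBA⟩
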